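/- Assume the group G of the walk is finite, and suppose that for every t in (0,1) the orbit-sum O(x,y) vanishes on the kernel curve: for every (x0,y0) in C^2 with K(x0,y0,t) = 0 at which the rational function O is defined, O(x0,y0) = 0. Then O(x,y) is the zero element of C(x,y). -/

import Mathlib

/-!
The kernel curves are the curves `xy = t P(x, y)` with `P = xy S`, and the orbit-sum enters only as
a rational function vanishing on them for infinitely many `t`. Fix a generic `x`. Since `A₁(x) ≠ 0`,
the polynomial `xy - t P(x, y)` has degree two in `y` and hence a root; since `A₋₁(x) ≠ 0`, the
polynomials `xy` and `P(x, y)` have no common root in `y`, so `t` can be recovered from the root as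
`xy / P(x, y)`. Thus infinitely many `t` give infinitely many points above a generic `x`, and the
union of the kernel curves is Zariski dense in the plane.
-/

open scoped BigOperators

namespace QuadrantWalk

/-- Position of a walk after its first `k` steps. Steps are indexed by `Fin 3 × Fin 3`,
with `s` representing the step `((s.1 : ℤ) - 1, (s.2 : ℤ) - 1) ∈ {-1,0,1}²`.
The walk starts at the origin `(0,0)`. -/
def pos {n : ℕ} (w : Fin n → Fin 3 × Fin 3) (k : ℕ) : ℤ × ℤ :=
  ∑ i ∈ Finset.univ.filter (fun i : Fin n => (i : ℕ) < k),
    (((w i).1 : ℤ) - 1, ((w i).2 : ℤ) - 1)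

open scoped Classical in
/-- `q d i j n` is the total weight (with respect to the weights `d`) of quadrant walks
of length `n` from `(0,0)` to `(i,j)`: walks whose positions all stay in `ℕ²`. -/
noncomputable def q (d : Fin 3 × Fin 3 → ℝ) (i j n : ℕ) : ℝ :=
  ∑ w ∈ Finset.univ.filter (fun w : Fin n → Fin 3 × Fin 3 =>
      (∀ k ≤ n, 0 ≤ (pos w k).1 ∧ 0 ≤ (pos w k).2) ∧ pos w n = ((i : ℤ), (j : ℤ))),
    ∏ s : Fin n, d (w s)

/-- `ℂ[x,y]`, where `x = X 0` and `y = X 1`. -/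
abbrev R2 : Type := MvPolynomial (Fin 2) ℂ

/-- The generating function `Q(x,y,t) = ∑ q(i,j,n) xⁱ yʲ tⁿ`, as a formal power series in `t`
with coefficients in `ℂ[x,y]` (the coefficient of `tⁿ` is a polynomial of degree at most `n`
in each of `x` and `y`). -/
noncomputable def Q (d : Fin 3 × Fin 3 → ℝ) : PowerSeries R2 :=
  PowerSeries.mk fun n =>
    ∑ i ∈ Finset.range (n + 1), ∑ j ∈ Finset.range (n + 1),
      MvPolynomial.C ((q d i j n : ℝ) : ℂ) * MvPolynomial.X 0 ^ i * MvPolynomial.X 1 ^ j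

/-- Formal partial derivative `∂/∂x` of a power series in `t` with coefficients in `ℂ[x,y]`. -/
noncomputable def Dx (φ : PowerSeries R2) : PowerSeries R2 :=
  PowerSeries.mk fun n => MvPolynomial.pderiv (0 : Fin 2) (PowerSeries.coeff n φ)

/-- Formal partial derivative `∂/∂y`. -/
noncomputable def Dy (φ : PowerSeries R2) : PowerSeries R2 :=
  PowerSeries.mk fun n => MvPolynomial.pderiv (1 : Fin 2) (PowerSeries.coeff n φ)

/-- Formal partial derivative `∂/∂t`. -/
noncomputable def Dt (φ : PowerSeries R2) : PowerSeries R2 :=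
  PowerSeries.mk fun n => ((n : R2) + 1) * PowerSeries.coeff (n + 1) φ

/-- `φ` satisfies a non-trivial linear differential equation with respect to the
derivation `D`, with coefficients that are polynomials in `x`, `y` and `t`
(an element of `ℂ[x,y][t]` is viewed as a power series in `t` over `ℂ[x,y]`). -/
noncomputable def SatLinODE (D : PowerSeries R2 → PowerSeries R2) (φ : PowerSeries R2) : Prop :=
  ∃ (m : ℕ) (c : Fin (m + 1) → Polynomial R2), (∃ i, c i ≠ 0) ∧
    ∑ i : Fin (m + 1), Polynomial.coeToPowerSeries.ringHom (c i) * D^[(i : ℕ)] φ = 0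

/-- The field `ℂ(x,y)`. -/
abbrev F2 : Type := FractionRing R2

noncomputable def Xf : F2 := algebraMap R2 F2 (MvPolynomial.X 0)

noncomputable def Yf : F2 := algebraMap R2 F2 (MvPolynomial.X 1)

/-- `A b`, for `b : Fin 3` encoding `j = b - 1 ∈ {-1,0,1}`, is the Laurent polynomial
`A_j(x) = ∑_{i=-1}^{1} d_{i,j} xⁱ`, viewed in `ℂ(x,y)`.  So `A 0 = A_{-1}`, `A 2 = A_1`. -/
noncomputable def A (d : Fin 3 × Fin 3 → ℝ) (b : Fin 3) : F2 :=
  ∑ a : Fin 3, algebraMap R2 F2 (MvPolynomial.C ((d (a, b) : ℝ) : ℂ)) * Xf ^ ((a : ℤ) - 1)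

/-- `B a` is `B_i(y) = ∑_{j=-1}^{1} d_{i,j} yʲ` for `i = a - 1`; `B 0 = B_{-1}`, `B 2 = B_1`. -/
noncomputable def B (d : Fin 3 × Fin 3 → ℝ) (a : Fin 3) : F2 :=
  ∑ b : Fin 3, algebraMap R2 F2 (MvPolynomial.C ((d (a, b) : ℝ) : ℂ)) * Yf ^ ((b : ℤ) - 1)

end QuadrantWalk

namespace QuadrantWalk

/-- The orbit-sum `O(x,y) = ∑_{j=0}^{n-1} (σʲ(xy) - (ι₁ σʲ)(xy)) ∈ ℂ(x,y)`, where
`σ = ι₂ ∘ ι₁` and `n` is the order of `σ`. -/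
noncomputable def orbitSum (ι₁ ι₂ : RingAut F2) : F2 :=
  ∑ j ∈ Finset.range (orderOf (ι₂ * ι₁)),
    (((ι₂ * ι₁) ^ j) (Xf * Yf) - (ι₁ * (ι₂ * ι₁) ^ j) (Xf * Yf))

/-- The kernel `K(x,y,t) = xy(1 - t S(x,y))` evaluated at a point `(x₀,y₀,t) ∈ ℂ × ℂ × ℝ`,
written in its polynomial form `x₀y₀ - t ∑_{a,b=0}^{2} d_{a-1,b-1} x₀ᵃ y₀ᵇ`. -/
noncomputable def Kval (d : Fin 3 × Fin 3 → ℝ) (x0 y0 : ℂ) (t : ℝ) : ℂ :=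
  x0 * y0 - (t : ℂ) * ∑ s : Fin 3 × Fin 3, ((d s : ℝ) : ℂ) * x0 ^ (s.1 : ℕ) * y0 ^ (s.2 : ℕ)

section

open Polynomial
open scoped Polynomial.Bivariate

theorem exists_eval_eq_mul_eval {k : Type*} [Field k] [IsAlgClosed k] {a b : k[X]}
    (hab : a.natDegree < b.natDegree) {t : k} (ht : t ≠ 0) :
    ∃ y, a.eval y = t * b.eval y := by
  have hdeg : (a - C t * b).natDegree = b.natDegree := by
    rw [natDegree_sub_eq_right_of_natDegree_lt (by rwa [natDegree_C_mul ht]),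
      natDegree_C_mul ht]
  obtain ⟨y, hy⟩ := IsAlgClosed.exists_root (a - C t * b)
    (degree_ne_of_natDegree_ne (hdeg.trans_ne (Nat.ne_zero_of_lt hab)))
  exact ⟨y, by simpa [sub_eq_zero] using hy⟩

theorem infinite_setOf_exists_eval_eq_mul_eval {k : Type*} [Field k] [IsAlgClosed k]
    {a b : k[X]} (hcop : IsCoprime a b) (hab : a.natDegree < b.natDegree) {T : Set k}
    (hT : T.Infinite) :
    {y | ∃ t ∈ T, a.eval y = t * b.eval y}.Infinite := by
  have hratio : T \ {0} ⊆ Set.range fun y => a.eval y / b.eval y := by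
    rintro t ⟨-, ht⟩
    obtain ⟨y, hy⟩ := exists_eval_eq_mul_eval hab ht
    have hby : b.eval y ≠ 0 := fun h0 => by
      have hroot := (isCoprime_iff_aeval_ne_zero_of_isAlgClosed k k a b).1 hcop y
      simp [h0, hy] at hroot
    exact ⟨y, (div_eq_iff hby).2 hy⟩
  refine ((hT.sdiff (Set.finite_singleton 0)).preimage hratio).mono ?_
  rintro y ⟨hyT, hy⟩
  exact ⟨_, hyT, (div_mul_cancel₀ _ fun h0 => hy (by simp [h0])).symm⟩

theorem eval_aeval_C_X {R : Type*} [CommSemiring R] (g : MvPolynomial (Fin 2) R) (x y : R) :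
    (MvPolynomial.aeval ![C x, X] g : R[X]).eval y = MvPolynomial.eval ![x, y] g := by
  induction g using MvPolynomial.induction_on with
  | C r => simp
  | add p q hp hq => simp [hp, hq]
  | mul_X p i hp => fin_cases i <;> simp [hp]

theorem mvPolynomial_eq_zero_of_infinite_fibers {R : Type*} [CommRing R] [IsDomain R]
    {g : MvPolynomial (Fin 2) R} {U : Set R} (hU : U.Infinite)
    (hg : ∀ x ∈ U, {y | MvPolynomial.eval ![x, y] g = 0}.Infinite) : g = 0 := by
  have : Infinite R := Set.infinite_univ_iff.1 (hU.mono (Set.subset_univ _))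
  have hfiber (x : R) (hx : x ∈ U) : (MvPolynomial.aeval ![C x, X] g : R[X]) = 0 :=
    eq_zero_of_infinite_isRoot _ (by simpa only [IsRoot.def, eval_aeval_C_X] using hg x hx)
  refine MvPolynomial.funext_set ![U, Set.univ]
    (Fin.forall_fin_two.2 ⟨hU, Set.infinite_univ⟩) fun v hv => ?_
  have hv' : v = ![v 0, v 1] := funext (Fin.forall_fin_two.2 ⟨rfl, rfl⟩)
  rw [hv', ← eval_aeval_C_X, hfiber _ (hv 0 trivial), eval_zero, map_zero]

theorem mvPolynomial_eq_zero_of_vanishes_on_mul_eq_mul_evalEval {k : Type*} [Field k]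
    [IsAlgClosed k] {P : k[X][Y]} (hdeg : 1 < P.natDegree) (hP0 : P.coeff 0 ≠ 0) {T : Set k}
    (hT : T.Infinite) {g : MvPolynomial (Fin 2) k}
    (hg : ∀ t ∈ T, ∀ x y, x * y = t * P.evalEval x y → MvPolynomial.eval ![x, y] g = 0) :
    g = 0 := by
  have hD : X * P.leadingCoeff * P.coeff 0 ≠ 0 :=
    mul_ne_zero (mul_ne_zero X_ne_zero (leadingCoeff_ne_zero.2 (ne_zero_of_natDegree_gt hdeg))) hP0
  refine mvPolynomial_eq_zero_of_infinite_fibers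
    (finite_setOfPred_isRoot hD).infinite_compl fun x hx => ?_
  obtain ⟨⟨hx0, hlead⟩, hcoeff⟩ :
      (x ≠ 0 ∧ P.leadingCoeff.eval x ≠ 0) ∧ (P.coeff 0).eval x ≠ 0 := by
    simpa [not_or] using hx
  have hcop : IsCoprime (C x * X) (P.map (evalRingHom x)) := by
    rw [isCoprime_mul_unit_left_left (isUnit_C.2 hx0.isUnit),
      irreducible_X.coprime_iff_not_dvd, X_dvd_iff, coeff_map]
    exact hcoeff
  have hlt : (C x * X).natDegree < (P.map (evalRingHom x)).natDegree := by
    rwa [natDegree_C_mul_X _ hx0, natDegree_map_of_leadingCoeff_ne_zero _ hlead]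
  refine (infinite_setOf_exists_eval_eq_mul_eval hcop hlt hT).mono ?_
  rintro y ⟨t, ht, hy⟩
  exact hg t ht x y (by simpa [map_evalRingHom_eval] using hy)

/-- The polynomial `xy S(x,y) = ∑_{a,b=0}^{2} c_{a,b} xᵃ yᵇ` of the step set with weights `c`, as a
polynomial in `y` over `k[x]`; its coefficient of `yᵇ` is `x A_{b-1}(x)`. -/
noncomputable def stepPoly {k : Type*} [Semiring k] (c : Fin 3 × Fin 3 → k) : k[X][Y] :=
  ∑ s, monomial (s.2 : ℕ) (monomial (s.1 : ℕ) (c s))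

theorem coeff_coeff_stepPoly {k : Type*} [Semiring k] (c : Fin 3 × Fin 3 → k) (a b : Fin 3) :
    ((stepPoly c).coeff b).coeff a = c (a, b) := by
  simp [stepPoly, Fintype.sum_prod_type, finsetSum_coeff, coeff_monomial, Fin.val_inj]

theorem evalEval_stepPoly {k : Type*} [CommSemiring k] (c : Fin 3 × Fin 3 → k) (x y : k) :
    (stepPoly c).evalEval x y = ∑ s, c s * x ^ (s.1 : ℕ) * y ^ (s.2 : ℕ) := by
  simp [stepPoly, evalEval, eval_finsetSum]

theorem coeff_stepPoly_ne_zero {d : Fin 3 × Fin 3 → ℝ} {b : Fin 3} (hA : A d b ≠ 0) :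
    (stepPoly fun s => (d s : ℂ)).coeff b ≠ 0 := by
  contrapose! hA
  have hd (a : Fin 3) : (d (a, b) : ℂ) = 0 := by
    rw [← coeff_coeff_stepPoly (fun s => (d s : ℂ)), hA, coeff_zero]
  simp [A, hd]

theorem Kval_eq_zero_iff {d : Fin 3 × Fin 3 → ℝ} {x y : ℂ} {t : ℝ} :
    Kval d x y t = 0 ↔ x * y = t * (stepPoly fun s => (d s : ℂ)).evalEval x y := by
  rw [Kval, sub_eq_zero, evalEval_stepPoly]

end

/-- The rational function `f` vanishes at the point `v` if it is defined there: every fraction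
`p / q` representing `f` with `q(v) ≠ 0` has `p(v) = 0`. The condition is void at points of
indeterminacy and at poles. -/
def VanishesAt {σ k : Type*} [CommRing k] (f : FractionRing (MvPolynomial σ k)) (v : σ → k) :
    Prop :=
  ∀ p q : MvPolynomial σ k,
    f * algebraMap _ (FractionRing (MvPolynomial σ k)) q = algebraMap _ _ p →
    MvPolynomial.eval v q ≠ 0 → MvPolynomial.eval v p = 0

theorem VanishesAt.eval_mul_eq_zero {σ k : Type*} [CommRing k]
    {f : FractionRing (MvPolynomial σ k)} {v : σ → k} (hf : VanishesAt f v)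
    {p q : MvPolynomial σ k}
    (hpq : f * algebraMap _ (FractionRing (MvPolynomial σ k)) q = algebraMap _ _ p) :
    MvPolynomial.eval v (p * q) = 0 := by
  rw [map_mul]
  by_cases hq : MvPolynomial.eval v q = 0
  · rw [hq, mul_zero]
  · rw [hf p q hpq hq, zero_mul]

theorem statement5_general (d : Fin 3 × Fin 3 → ℝ) (hA1 : A d 2 ≠ 0) (hAm1 : A d 0 ≠ 0)
    {T : Set ℝ} (hT : T.Infinite) (f : F2)
    (hf : ∀ t ∈ T, ∀ x y : ℂ, Kval d x y t = 0 → VanishesAt f ![x, y]) : f = 0 := by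
  obtain ⟨⟨p, q⟩, hfpq⟩ := IsLocalization.surj (nonZeroDivisors R2) f
  have hdeg : 1 < (stepPoly fun s => (d s : ℂ)).natDegree :=
    Polynomial.le_natDegree_of_ne_zero (by simpa using coeff_stepPoly_ne_zero hA1)
  have hcoeff : (stepPoly fun s => (d s : ℂ)).coeff 0 ≠ 0 := by
    simpa using coeff_stepPoly_ne_zero hAm1
  have hpq : p * q = 0 := by
    refine mvPolynomial_eq_zero_of_vanishes_on_mul_eq_mul_evalEval hdeg hcoeff
      (hT.image Complex.ofReal_injective.injOn) ?_
    rintro _ ⟨t, ht, rfl⟩ x y hxy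
    exact (hf t ht x y (Kval_eq_zero_iff.2 hxy)).eval_mul_eq_zero hfpq
  have hp : p = 0 := (mul_eq_zero.1 hpq).resolve_right (nonZeroDivisors.ne_zero q.2)
  rw [hp, map_zero] at hfpq
  exact (mul_eq_zero.1 hfpq).resolve_right
    (IsFractionRing.to_map_ne_zero_of_mem_nonZeroDivisors q.2)

/-- Assume the group of the walk is finite, and that for every
`t ∈ (0,1)` the orbit-sum `O(x,y)` vanishes at each point `(x₀,y₀)` of the kernel curve
`K(x₀,y₀,t) = 0` at which it is defined (i.e. for every representation `O = p/q` with
`q(x₀,y₀) ≠ 0` one has `p(x₀,y₀) = 0`).  Then `O(x,y) = 0` in `ℂ(x,y)`. -/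
theorem statement5
    (d : Fin 3 × Fin 3 → ℝ) (hd : ∀ s, 0 ≤ d s) (hsum : ∑ s : Fin 3 × Fin 3, d s = 1)
    (hA1 : A d 2 ≠ 0) (hAm1 : A d 0 ≠ 0) (hB1 : B d 2 ≠ 0) (hBm1 : B d 0 ≠ 0)
    (ι₁ ι₂ : RingAut F2)
    (h1x : ι₁ Xf = Xf) (h1y : ι₁ Yf = A d 0 / (A d 2 * Yf))
    (h2y : ι₂ Yf = Yf) (h2x : ι₂ Xf = B d 0 / (B d 2 * Xf))
    (hfin : Finite (Subgroup.closure {ι₁, ι₂} : Subgroup (RingAut F2)))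
    (hvanish : ∀ t ∈ Set.Ioo (0 : ℝ) 1, ∀ x0 y0 : ℂ, Kval d x0 y0 t = 0 →
      ∀ p q : R2, q ≠ 0 →
        orbitSum ι₁ ι₂ * algebraMap R2 F2 q = algebraMap R2 F2 p →
        MvPolynomial.eval (fun i : Fin 2 => if i = 0 then x0 else y0) q ≠ 0 →
        MvPolynomial.eval (fun i : Fin 2 => if i = 0 then x0 else y0) p = 0) :
    orbitSum ι₁ ι₂ = 0 := by
  have hpoint (x y : ℂ) : (fun i : Fin 2 => if i = 0 then x else y) = ![x, y] :=
    funext (Fin.forall_fin_two.2 ⟨rfl, rfl⟩)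
  simp only [hpoint] at hvanish
  exact statement5_general d hA1 hAm1 (Set.Ioo_infinite one_pos) _ fun t ht x y hK p q hpq hq =>
    hvanish t ht x y hK p q (by rintro rfl; exact hq (map_zero _)) hpq hq

end QuadrantWalk
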